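/- arXiv:1802.02876 — 2 statements merged into one kernel-verified Lean document; each statement's English description precedes it below -/
import Mathlib

section
/- Let F : [0,∞)² → [0,∞) satisfy: (grounded) F(u,0) = F(0,v) = 0 for all u, v ≥ 0; (2-increasing) F(u₂,v₂) − F(u₁,v₂) − F(u₂,v₁) + F(u₁,v₁) ≥ 0 whenever u₁ ≤ u₂ and v₁ ≤ v₂; (uniform margin) F(u,v) → v as u → ∞, for every v ≥ 0. Assume that for all u, v ≥ 0 the partial derivative D(u,v) = ∂F(u,v)/∂v exists. Then for every fixed v ≥ 0: (i) the function u ↦ D(u,v) is nondecreasing on [0,∞); (ii) 0 ≤ D(u,v) ≤ 1 for all u ≥ 0; (iii) D(0,v) = 0. -/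
open Real Filter

/-!
Two-increasing means that every increment `F u₂ - F u₁`, `u₁ ≤ u₂`, is monotone in the second
variable. Letting `u₂ → ∞`, the same holds for `G - F u`, where `G` is the margin. The derivative of
a monotone function is nonnegative, so differentiating in the second variable gives
`D u₁ ≤ D u₂ ≤ G'`. Groundedness makes `D` vanish at the least `u`, so `D` is nonnegative
everywhere, and `G' = 1` for the uniform margin.
-/

section

open Set Topology

/-- A function `F` of two variables is two-increasing on `s ×ˢ t` if it assigns nonnegative mass
`F u₂ v₂ - F u₁ v₂ - F u₂ v₁ + F u₁ v₁` to every rectangle with corners in `s ×ˢ t`. This is encoded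
as monotonicity on `t` of the increments of `F` in the first variable. -/
def TwoIncreasingOn {α β E : Type*} [Preorder α] [Preorder β] [Preorder E] [Sub E]
    (s : Set α) (t : Set β) (F : α → β → E) : Prop :=
  ∀ ⦃u₁⦄, u₁ ∈ s → ∀ ⦃u₂⦄, u₂ ∈ s → u₁ ≤ u₂ → MonotoneOn (F u₂ - F u₁) t

theorem twoIncreasingOn_iff_mass_nonneg {α β E : Type*} [Preorder α] [Preorder β] [Preorder E]
    [AddCommGroup E] [IsOrderedAddMonoid E] {s : Set α} {t : Set β} {F : α → β → E} :
    TwoIncreasingOn s t F ↔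
      ∀ ⦃u₁⦄, u₁ ∈ s → ∀ ⦃u₂⦄, u₂ ∈ s → u₁ ≤ u₂ → ∀ ⦃v₁⦄, v₁ ∈ t → ∀ ⦃v₂⦄, v₂ ∈ t → v₁ ≤ v₂ →
        0 ≤ F u₂ v₂ - F u₁ v₂ - F u₂ v₁ + F u₁ v₁ := by
  have increment_le_iff (u₁ u₂ : α) (v₁ v₂ : β) : F u₂ v₁ - F u₁ v₁ ≤ F u₂ v₂ - F u₁ v₂ ↔
      0 ≤ F u₂ v₂ - F u₁ v₂ - F u₂ v₁ + F u₁ v₁ := by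
    rw [← sub_nonneg, sub_sub_eq_add_sub, add_sub_right_comm]
  simp only [TwoIncreasingOn, MonotoneOn, Pi.sub_apply, increment_le_iff]

theorem TwoIncreasingOn.monotoneOn_margin_sub {α β E : Type*} [Preorder α] [IsDirectedOrder α]
    [Preorder β] [Preorder E] [Sub E] [TopologicalSpace E] [ContinuousSub E] [OrderClosedTopology E]
    {s : Set α} {t : Set β} {F : α → β → E} {G : β → E} {u : α}
    (hF : TwoIncreasingOn s t F) (hs : s ∈ atTop) (hu : u ∈ s)
    (hG : ∀ x ∈ t, Tendsto (F · x) atTop (𝓝 (G x))) :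
    MonotoneOn (G - F u) t := by
  intro x hx y hy hxy
  have : Nonempty α := ⟨u⟩
  refine le_of_tendsto_of_tendsto ((hG x hx).sub_const (F u x)) ((hG y hy).sub_const (F u y)) ?_
  filter_upwards [hs, eventually_ge_atTop u] with w hw huw
  exact hF hu hw huw hx hy hxy

variable {𝕜 α : Type*} [NontriviallyNormedField 𝕜] [LinearOrder 𝕜] [IsStrictOrderedRing 𝕜]
  [OrderTopology 𝕜] [Preorder α] {s : Set α} {t : Set 𝕜} {F : α → 𝕜 → 𝕜} {D : α → 𝕜}
  {G : 𝕜 → 𝕜} {v g : 𝕜}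

theorem TwoIncreasingOn.monotoneOn_deriv (hF : TwoIncreasingOn s t F) (hv : AccPt v (𝓟 t))
    (hD : ∀ u ∈ s, HasDerivWithinAt (F u) (D u) t v) :
    MonotoneOn D s := fun u₁ hu₁ u₂ hu₂ hu =>
  sub_nonneg.mp <| ((hD u₂ hu₂).sub (hD u₁ hu₁)).nonneg_of_monotoneOn hv (hF hu₁ hu₂ hu)

theorem TwoIncreasingOn.deriv_le_deriv_margin [IsDirectedOrder α] {u : α} {d : 𝕜}
    (hF : TwoIncreasingOn s t F) (hv : AccPt v (𝓟 t)) (hs : s ∈ atTop) (hu : u ∈ s)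
    (hG : ∀ x ∈ t, Tendsto (F · x) atTop (𝓝 (G x)))
    (hg : HasDerivWithinAt G g t v) (hd : HasDerivWithinAt (F u) d t v) :
    d ≤ g :=
  sub_nonneg.mp <| (hg.sub hd).nonneg_of_monotoneOn hv (hF.monotoneOn_margin_sub hs hu hG)

theorem levy_copula_partial_derivative_basic_general [IsDirectedOrder α] {a : α}
    (hv : AccPt v (𝓟 t)) (hground : EqOn (F a) 0 t) (hincr : TwoIncreasingOn (Ici a) t F)
    (hmargin : ∀ x ∈ t, Tendsto (F · x) atTop (𝓝 (G x))) (hG : HasDerivWithinAt G g t v)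
    (hD : ∀ u ∈ Ici a, HasDerivWithinAt (F u) (D u) t v) :
    MonotoneOn D (Ici a) ∧ (∀ u ∈ Ici a, 0 ≤ D u ∧ D u ≤ g) ∧ D a = 0 := by
  have hmono : MonotoneOn D (Ici a) := hincr.monotoneOn_deriv hv hD
  have hzero : D a = 0 := le_antisymm
    ((hD a self_mem_Ici).nonpos_of_antitoneOn hv (antitoneOn_const.congr hground.symm))
    ((hD a self_mem_Ici).nonneg_of_monotoneOn hv (monotoneOn_const.congr hground.symm))
  refine ⟨hmono, fun u hu => ⟨?_, ?_⟩, hzero⟩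
  · exact hzero.ge.trans (hmono self_mem_Ici hu hu)
  · exact hincr.deriv_le_deriv_margin hv (Ici_mem_atTop a) hu hmargin hG (hD u hu)

end

/-- for a grounded, 2-increasing F on [0,∞)² with uniform margin
F(u,v) → v as u → ∞, the partial derivative D(u,v) = ∂F/∂v (assumed to exist) is,
for every fixed v ≥ 0, nondecreasing in u, takes values in [0,1], and vanishes at u = 0. -/
theorem levy_copula_partial_derivative_basic
    (F D : ℝ → ℝ → ℝ)
    (hground : ∀ u : ℝ, 0 ≤ u → F u 0 = 0 ∧ F 0 u = 0)
    (hincr : ∀ u₁ u₂ v₁ v₂ : ℝ, 0 ≤ u₁ → u₁ ≤ u₂ → 0 ≤ v₁ → v₁ ≤ v₂ →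
      0 ≤ F u₂ v₂ - F u₁ v₂ - F u₂ v₁ + F u₁ v₁)
    (hmargin : ∀ v : ℝ, 0 ≤ v → Tendsto (fun u => F u v) atTop (nhds v))
    (hD : ∀ u v : ℝ, 0 ≤ u → 0 ≤ v →
      HasDerivWithinAt (fun t => F u t) (D u v) (Set.Ici 0) v) :
    ∀ v : ℝ, 0 ≤ v →
      (MonotoneOn (fun u => D u v) (Set.Ici 0)) ∧
      (∀ u : ℝ, 0 ≤ u → 0 ≤ D u v ∧ D u v ≤ 1) ∧
      D 0 v = 0 := by
  intro v hv
  have hacc : AccPt v (𝓟 (Set.Ici 0)) := (uniqueDiffOn_Ici 0 v hv).accPt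
  have hF : TwoIncreasingOn (Set.Ici 0) (Set.Ici 0) F :=
    twoIncreasingOn_iff_mass_nonneg.mpr fun u₁ hu₁ u₂ _ hu v₁ hv₁ v₂ _ hv₁₂ =>
      hincr u₁ u₂ v₁ v₂ hu₁ hu hv₁ hv₁₂
  exact levy_copula_partial_derivative_basic_general hacc (fun t ht => (hground t ht).2) hF
    hmargin (hasDerivWithinAt_id v _) (fun u hu => hD u v hu hv)
end

section
/- Let d ≥ 2 and let F : [0,∞)^d → [0,∞) be d-increasing, i.e. for every rectangle (a,b] = (a₁,b₁] × … × (a_d,b_d] ⊆ [0,∞)^d the F-volume V_F((a,b]) = Σ_{c ∈ vertices} (−1)^{N(c)} F(c) is nonnegative, where the sum runs over the 2^d vertices c of the rectangle and N(c) is the number of indices k with c_k = a_k. Assume that the partial derivative ∂F/∂u_d exists everywhere on [0,∞)^d. Then for every fixed v ≥ 0, the function G_v(u₁,…,u_{d−1}) = (∂F/∂u_d)(u₁,…,u_{d−1},v) is (d−1)-increasing on [0,∞)^{d−1}: the G_v-volume of every rectangle in [0,∞)^{d−1} is nonnegative. -/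
open Real Finset

/-- The F-volume of the rectangle (a, b] ⊆ ℝ^n: the alternating sum
Σ_c (−1)^{N(c)} F(c) over the 2^n vertices c of the rectangle, N(c) being the number of
coordinates where c picks the lower endpoint a. -/
noncomputable def rectVolume (n : ℕ) (F : (Fin n → ℝ) → ℝ) (a b : Fin n → ℝ) : ℝ :=
  ∑ s : Finset (Fin n), (-1 : ℝ) ^ s.card * F (fun k => if k ∈ s then a k else b k)

/-! The volume of a box with faces `s` and `t` in the `p`-th coordinate is the volume of the
section of `F` at `t` minus that of its section at `s`. So if `F` is increasing on boxes, the volume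
of its section at `t` is monotone in `t`. This volume is a finite signed sum of values of `F`, so
its derivative in `t` is the volume of the partial derivative of `F`, hence nonnegative. -/

section

variable {n : ℕ}

theorem sum_finset_eq_sum_map_succAbove_add_sum_insert {M : Type*} [AddCommMonoid M]
    (p : Fin (n + 1)) (g : Finset (Fin (n + 1)) → M) :
    ∑ S, g S = ∑ S : Finset (Fin n), g (S.map p.succAboveEmb) +
      ∑ S : Finset (Fin n), g (insert p (S.map p.succAboveEmb)) := by
  have hp : p ∉ univ.image p.succAboveEmb := by simp
  have huniv : (univ : Finset (Finset (Fin (n + 1)))) =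
      (insert p (univ.image p.succAboveEmb)).powerset := by
    rw [eq_comm, powerset_eq_univ, Fin.univ_succAbove n p, cons_eq_insert, map_eq_image]
  have hinj : Function.Injective fun S : Finset (Fin n) ↦ S.image p.succAboveEmb :=
    image_injective p.succAboveEmb.injective
  simp only [huniv, sum_powerset_insert hp, powerset_image, sum_image hinj.injOn, powerset_univ,
    map_eq_image]

theorem piecewise_map_succAbove_insertNth {α : Type*} (p : Fin (n + 1)) (S : Finset (Fin n))
    (a b : Fin n → α) (s t : α) :
    (S.map p.succAboveEmb).piecewise (p.insertNth s a : Fin (n + 1) → α) (p.insertNth t b) =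
      p.insertNth t (S.piecewise a b) := by
  ext k
  cases k using p.succAboveCases <;> simp [piecewise, Fin.succAbove_ne]

theorem rectVolume_eq_sum_piecewise (F : (Fin n → ℝ) → ℝ) (a b : Fin n → ℝ) :
    rectVolume n F a b = ∑ S : Finset (Fin n), (-1) ^ #S * F (S.piecewise a b) :=
  rfl

theorem rectVolume_insertNth (p : Fin (n + 1)) (F : (Fin (n + 1) → ℝ) → ℝ) (a b : Fin n → ℝ)
    (s t : ℝ) :
    rectVolume (n + 1) F (p.insertNth s a) (p.insertNth t b) =
      rectVolume n (fun y ↦ F (p.insertNth t y)) a b -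
        rectVolume n (fun y ↦ F (p.insertNth s y)) a b := by
  have hp (S : Finset (Fin n)) : p ∉ S.map p.succAboveEmb := by simp [Fin.succAbove_ne]
  simp only [rectVolume_eq_sum_piecewise, sum_finset_eq_sum_map_succAbove_add_sum_insert p,
    piecewise_insert, piecewise_map_succAbove_insertNth, Fin.insertNth_apply_same,
    Fin.update_insertNth, card_insert_of_notMem (hp _), card_map, pow_succ, mul_neg_one, neg_mul,
    sum_neg_distrib, sub_eq_add_neg]

theorem hasDerivWithinAt_rectVolume {F : ℝ → (Fin n → ℝ) → ℝ} {F' : (Fin n → ℝ) → ℝ}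
    {a b : Fin n → ℝ} {T : Set ℝ} {v : ℝ}
    (hF : ∀ S : Finset (Fin n), HasDerivWithinAt (fun t ↦ F t (S.piecewise a b))
      (F' (S.piecewise a b)) T v) :
    HasDerivWithinAt (fun t ↦ rectVolume n (F t) a b) (rectVolume n F' a b) T v :=
  HasDerivWithinAt.fun_sum fun S _ ↦ (hF S).const_mul _

/-- `F` is `n`-increasing on the product of the sets `I k`: every box with corners in the product
has nonnegative `F`-volume. The `I k` need not be intervals, since each vertex of such a box lies in
the product anyway. -/
def BoxIncreasingOn (F : (Fin n → ℝ) → ℝ) (I : Fin n → Set ℝ) : Prop :=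
  ∀ a b : Fin n → ℝ, (∀ k, a k ∈ I k) → (∀ k, b k ∈ I k) → (∀ k, a k ≤ b k) →
    0 ≤ rectVolume n F a b

theorem BoxIncreasingOn.monotoneOn_rectVolume_insertNth {F : (Fin (n + 1) → ℝ) → ℝ}
    {I : Fin (n + 1) → Set ℝ} (hF : BoxIncreasingOn F I) (p : Fin (n + 1)) {a b : Fin n → ℝ}
    (ha : ∀ k, a k ∈ I (p.succAbove k)) (hb : ∀ k, b k ∈ I (p.succAbove k))
    (hab : ∀ k, a k ≤ b k) :
    MonotoneOn (fun t ↦ rectVolume n (fun y ↦ F (p.insertNth t y)) a b) (I p) := by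
  intro s hs t ht hst
  have hvol : 0 ≤ rectVolume (n + 1) F (p.insertNth s a) (p.insertNth t b) := by
    apply hF <;> simp [Fin.forall_iff_succAbove p, *]
  rwa [rectVolume_insertNth, sub_nonneg] at hvol

theorem d_increasing_partial_derivative_general {F : (Fin (n + 1) → ℝ) → ℝ}
    {I : Fin (n + 1) → Set ℝ} (hF : BoxIncreasingOn F I) (p : Fin (n + 1)) {v : ℝ}
    (hv : AccPt v (Filter.principal (I p))) {F' : (Fin n → ℝ) → ℝ}
    (hF' : ∀ y : Fin n → ℝ, (∀ k, y k ∈ I (p.succAbove k)) →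
      HasDerivWithinAt (fun t ↦ F (p.insertNth t y)) (F' y) (I p) v) :
    BoxIncreasingOn F' fun k ↦ I (p.succAbove k) := by
  intro a b ha hb hab
  have hderiv : HasDerivWithinAt (fun t ↦ rectVolume n (fun y ↦ F (p.insertNth t y)) a b)
      (rectVolume n F' a b) (I p) v :=
    hasDerivWithinAt_rectVolume fun S ↦
      hF' _ fun k ↦ S.piecewise_cases a b (· ∈ I (p.succAbove k)) (ha k) (hb k)
  exact hderiv.nonneg_of_monotoneOn hv (hF.monotoneOn_rectVolume_insertNth p ha hb hab)

end

/-- if F : [0,∞)^d → [0,∞) is d-increasing (d = m+1 ≥ 2) and its partial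
derivative in the last coordinate exists everywhere on [0,∞)^d, then for every fixed v ≥ 0
the function G_v(u₁,…,u_{d-1}) = ∂F/∂u_d(u₁,…,u_{d-1},v) is (d−1)-increasing. -/
theorem d_increasing_partial_derivative
    (m : ℕ) (hm : 1 ≤ m)
    (F : (Fin (m + 1) → ℝ) → ℝ)
    (hFnonneg : ∀ x : Fin (m + 1) → ℝ, (∀ k, 0 ≤ x k) → 0 ≤ F x)
    (hincr : ∀ a b : Fin (m + 1) → ℝ, (∀ k, 0 ≤ a k) → (∀ k, a k ≤ b k) →
      0 ≤ rectVolume (m + 1) F a b)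
    (D : (Fin (m + 1) → ℝ) → ℝ)
    (hD : ∀ x : Fin (m + 1) → ℝ, (∀ k, 0 ≤ x k) →
      HasDerivWithinAt (fun t => F (Function.update x (Fin.last m) t)) (D x)
        (Set.Ici 0) (x (Fin.last m))) :
    ∀ v : ℝ, 0 ≤ v →
      ∀ a b : Fin m → ℝ, (∀ k, 0 ≤ a k) → (∀ k, a k ≤ b k) →
        0 ≤ rectVolume m (fun y => D (Fin.snoc y v)) a b := by
  intro v hv a b ha hab
  have hF : BoxIncreasingOn F fun _ ↦ Set.Ici 0 := fun a b ha _ hab ↦ hincr a b ha hab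
  refine d_increasing_partial_derivative_general hF (Fin.last m)
    (uniqueDiffOn_Ici 0 v hv).accPt (fun y hy ↦ ?_) a b ha (fun k ↦ (ha k).trans (hab k)) hab
  simpa [Fin.update_snoc_last] using
    hD (Fin.snoc y v) (by simpa [Fin.forall_fin_succ'] using ⟨hy, hv⟩)
end
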